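/- arXiv:2305.18186 — 2 statements merged into one kernel-verified Lean document; each statement's English description precedes it below -/
import Mathlib

section
/- Let r > 1, fix j ∈ {1,2}, sublattice labels α₁ ∈ 𝓐₁, α₂ ∈ 𝓐₂ and γ_{3−j} ∈ Γ_{3−j}. Assume u_k(·, α_k) ∈ L^∞(ℝ²; ℝ³) for k = 1,2 and f ∈ L^∞_{2r}(ℝ² × [−L_u^z, L_u^z]). Then ∫_{ℝ²} |f(x + g_{j,α,γ_{3−j}}(x))| dx ≤ (5^{r−1} π / (r−1)) · (1 + d_{𝓐₁,𝓐₂} + ‖u₁‖_∞ + ‖u₂‖_∞)^{2r} · ‖⟨·⟩^{2r} f‖_{L^∞(ℝ² × [−L_u^z, L_u^z])}. -/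
open scoped Real BigOperators
open MeasureTheory Filter Topology Matrix

noncomputable section

/-- The 2×2 rotation matrix through angle `φ`. -/
def Rot (φ : ℝ) : Matrix (Fin 2) (Fin 2) ℝ :=
  !![Real.cos φ, -Real.sin φ; Real.sin φ, Real.cos φ]

/-- Euclidean norm on `ℝ²`. -/
def norm2 (v : Fin 2 → ℝ) : ℝ := Real.sqrt (v 0 ^ 2 + v 1 ^ 2)

/-- Euclidean norm on `ℝ³`. -/
def norm3 (v : Fin 3 → ℝ) : ℝ := Real.sqrt (v 0 ^ 2 + v 1 ^ 2 + v 2 ^ 2)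

/-- Cast an integer vector to a real vector. -/
def iv (n : Fin 2 → ℤ) : Fin 2 → ℝ := fun i => (n i : ℝ)

/-- The lattice `M ℤ²`. -/
def lat (M : Matrix (Fin 2) (Fin 2) ℝ) : Set (Fin 2 → ℝ) :=
  {v | ∃ n : Fin 2 → ℤ, v = M.mulVec (iv n)}

/-- The unit cell `M [0,1)²`. -/
def cell (M : Matrix (Fin 2) (Fin 2) ℝ) : Set (Fin 2 → ℝ) :=
  {v | ∃ t : Fin 2 → ℝ, (∀ i, t i ∈ Set.Ico (0 : ℝ) 1) ∧ v = M.mulVec t}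

/-- The reciprocal matrix `2π M⁻ᵀ`. -/
def recip (M : Matrix (Fin 2) (Fin 2) ℝ) : Matrix (Fin 2) (Fin 2) ℝ :=
  (2 * π) • (M⁻¹)ᵀ

/-- A pair of lattices with reciprocal-lattice matrices `B1`, `B2` is incommensurate iff
`G₁ + G₂ = 0` with `G_k` in the respective reciprocal lattice implies `G₁ = G₂ = 0`. -/
def Incommensurate (B1 B2 : Matrix (Fin 2) (Fin 2) ℝ) : Prop :=
  ∀ G1 ∈ lat B1, ∀ G2 ∈ lat B2, G1 + G2 = 0 → G1 = 0 ∧ G2 = 0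

/-- Euclidean distance from `v ∈ ℝ²` to the integer lattice `ℤ²`. -/
def distZ2 (v : Fin 2 → ℝ) : ℝ := ⨅ m : Fin 2 → ℤ, norm2 (v - iv m)

/-- `θ` is a `(q,K,σ)`-Diophantine 2D rotation. -/
def IsDiophantine (A : Matrix (Fin 2) (Fin 2) ℝ) (q K σ θ : ℝ) : Prop :=
  ∀ n : Fin 2 → ℤ, n ≠ 0 →
    K / norm2 (iv n) ^ (2 * σ) ≤ distZ2 ((q • (Aᵀ * Rot θ * (A⁻¹)ᵀ)).mulVec (iv n)) ∧
    K / norm2 (iv n) ^ (2 * σ) ≤ distZ2 ((q⁻¹ • (Aᵀ * Rot (-θ) * (A⁻¹)ᵀ)).mulVec (iv n))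

/-- The moiré length scale ratio `ρ_𝓜`. -/
def rhoM (q θ : ℝ) : ℝ :=
  (Real.sqrt ((Real.sqrt q - (Real.sqrt q)⁻¹) ^ 2 + 4 * Real.sin (θ / 2) ^ 2))⁻¹

/-- Riemann zeta function (for real `s > 1`, via its Dirichlet series). -/
def zetaR (s : ℝ) : ℝ := ∑' n : ℕ, ((n : ℝ) + 1) ^ (-s)

/-- Operator (spectral) norm of a 2×2 real matrix w.r.t. the Euclidean norm. -/
def opNorm2 (M : Matrix (Fin 2) (Fin 2) ℝ) : ℝ :=
  ⨆ x : {x : Fin 2 → ℝ // norm2 x ≤ 1}, norm2 (M.mulVec x.1)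

/-- Embedding `ℝ² ↪ ℝ³`, `x ↦ (x, 0)`. -/
def emb (x : Fin 2 → ℝ) : Fin 3 → ℝ := ![x 0, x 1, 0]

/-- Japanese bracket `⟨x⟩ = (1 + |x|²)^{1/2}` on `ℝ³`. -/
def jap3 (x : Fin 3 → ℝ) : ℝ := Real.sqrt (1 + norm3 x ^ 2)

/-- The region `ℝ² × [−L, L] ⊆ ℝ³`. -/
def slab (L : ℝ) : Set (Fin 3 → ℝ) := {x | x 2 ∈ Set.Icc (-L) L}

/-- Euclidean inner product on `ℝ²`. -/
def dot2 (a b : Fin 2 → ℝ) : ℝ := ∑ i, a i * b i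

/-- The index box `⟦−N, N⟧²`. -/
def box (N : ℕ) : Finset (Fin 2 → ℤ) :=
  Finset.Icc (fun _ => -(N : ℤ)) (fun _ => (N : ℤ))

/-- The normalized Dirichlet kernel `Δ_N^j` of the lattice `A_j ℤ²`. -/
def Dir (Aj : Matrix (Fin 2) (Fin 2) ℝ) (N : ℕ) (G : Fin 2 → ℝ) : ℂ :=
  (((2 * N + 1 : ℝ)) ^ 2)⁻¹ •
    ∑ n ∈ box N, Complex.exp (Complex.I * (dot2 G (Aj.mulVec (iv n)) : ℝ))


lemma radial_aux (r : ℝ) (hr : 1 < r) :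
    ∫⁻ t in Set.Ioi (0:ℝ), ENNReal.ofReal (t * (1 + t^2) ^ (-r)) = ENNReal.ofReal (1 / (2 * (r - 1))) := by
  have hd : ∀ t ∈ Set.Ioi (0:ℝ), HasDerivAt (fun t : ℝ => (1 + t^2) ^ (1 - r) * (-1 / (2 * (r-1)))) (t * (1 + t^2) ^ (-r)) t := by
    intro t ht
    have hp : (0:ℝ) < 1 + t^2 := by positivity
    have h1 : HasDerivAt (fun t : ℝ => 1 + t^2) (2 * t) t := by
      simpa using ((hasDerivAt_pow 2 t).const_add 1)
    have h2 := (h1.rpow_const (p := 1 - r) (Or.inl hp.ne')).mul_const (-1 / (2 * (r-1)))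
    refine h2.congr_deriv ?_
    have : r - 1 ≠ 0 := by linarith
    rw [show 1 - r - 1 = -r by ring]
    field_simp
    ring
  have hc : ContinuousWithinAt (fun t : ℝ => (1 + t^2) ^ (1 - r) * (-1 / (2 * (r-1)))) (Set.Ici 0) 0 := by
    apply ContinuousAt.continuousWithinAt
    apply ContinuousAt.mul _ continuousAt_const
    apply ContinuousAt.rpow_const (by fun_prop)
    left; norm_num
  have hn : ∀ t ∈ Set.Ioi (0:ℝ), 0 ≤ t * (1 + t^2) ^ (-r) := by
    intro t ht
    have : (0:ℝ) < t := ht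
    positivity
  have hl : Tendsto (fun t : ℝ => (1 + t^2) ^ (1 - r) * (-1 / (2 * (r-1)))) atTop (𝓝 0) := by
    have h1 : Tendsto (fun t : ℝ => 1 + t^2) atTop atTop :=
      tendsto_atTop_add_const_left _ _ (tendsto_pow_atTop two_ne_zero)
    have h2 := (tendsto_rpow_neg_atTop (y := r - 1) (by linarith)).comp h1
    have h3 := h2.mul_const (-1 / (2 * (r-1)))
    simpa [Function.comp_def] using h3
  have hi := integrableOn_Ioi_deriv_of_nonneg hc hd hn hl
  rw [← ofReal_integral_eq_lintegral_ofReal hi ((ae_restrict_iff' measurableSet_Ioi).2 (ae_of_all _ hn)),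
    integral_Ioi_of_hasDerivAt_of_nonneg hc hd hn hl]
  congr 1
  have : r - 1 ≠ 0 := by linarith
  norm_num
  field_simp

lemma plane_aux (r : ℝ) (hr : 1 < r) :
    ∫⁻ x : Fin 2 → ℝ, ENNReal.ofReal ((1 + (x 0 ^ 2 + x 1 ^ 2)) ^ (-r)) = ENNReal.ofReal (π / (r - 1)) := by
  have h1 := (volume_preserving_finTwoArrow ℝ).lintegral_comp_emb (MeasurableEquiv.measurableEmbedding _)
    (fun p : ℝ × ℝ => ENNReal.ofReal ((1 + (p.1 ^ 2 + p.2 ^ 2)) ^ (-r)))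
  simp only [MeasurableEquiv.finTwoArrow_apply] at h1
  rw [h1, ← lintegral_comp_polarCoord_symm, polarCoord_target]
  have h2 : ∀ p ∈ Set.Ioi (0:ℝ) ×ˢ Set.Ioo (-π) π, ENNReal.ofReal p.1 • ENNReal.ofReal ((1 + ((polarCoord.symm p).1 ^ 2 + (polarCoord.symm p).2 ^ 2)) ^ (-r)) = ENNReal.ofReal (p.1 * (1 + p.1^2) ^ (-r)) * 1 := by
    intro p hp
    have : (0:ℝ) < p.1 := hp.1
    rw [smul_eq_mul, ← ENNReal.ofReal_mul this.le, mul_one, polarCoord_symm_apply]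
    congr 4
    simp only []
    nlinarith [Real.sin_sq_add_cos_sq p.2]
  rw [setLIntegral_congr_fun (measurableSet_Ioi.prod measurableSet_Ioo) h2, Measure.volume_eq_prod, ← Measure.prod_restrict,
    lintegral_prod_mul (f := fun t : ℝ => ENNReal.ofReal (t * (1 + t^2) ^ (-r))) (g := fun _ => 1) (by fun_prop) (by fun_prop), radial_aux r hr]
  simp only [lintegral_const, Measure.restrict_apply_univ, Real.volume_Ioo, one_mul]
  rw [← ENNReal.ofReal_mul (by have : 0 < r - 1 := by linarith
                               positivity)]
  congr 1
  have : r - 1 ≠ 0 := by linarith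
  field_simp
  ring

lemma le_iSup2 {ι κ : Type*} (F : ι → κ → ℝ) (C : ℝ) (h : ∀ x a, F x a ≤ C) (h0 : ∀ x a, 0 ≤ F x a) (x : ι) (a : κ) :
    F x a ≤ ⨆ x, ⨆ a, F x a := by
  have hC : 0 ≤ C := (h0 x a).trans (h x a)
  have h1 : F x a ≤ ⨆ a, F x a := le_ciSup (f := fun a => F x a) ⟨C, by rintro _ ⟨b, rfl⟩; exact h x b⟩ a
  refine h1.trans (le_ciSup (f := fun x => ⨆ a, F x a) ⟨C, ?_⟩ x)
  rintro _ ⟨b, rfl⟩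
  exact Real.iSup_le (h b) hC

lemma norm3_nonneg (v : Fin 3 → ℝ) : 0 ≤ norm3 v := Real.sqrt_nonneg _

lemma norm3_sq (v : Fin 3 → ℝ) : norm3 v ^ 2 = v 0 ^ 2 + v 1 ^ 2 + v 2 ^ 2 :=
  Real.sq_sqrt (by positivity)

lemma norm3_eq (v : Fin 3 → ℝ) : norm3 v = ‖(WithLp.toLp 2 v : EuclideanSpace ℝ (Fin 3))‖ := by
  simp [norm3, EuclideanSpace.norm_eq, Fin.sum_univ_three]

lemma norm3_add_le (v w : Fin 3 → ℝ) : norm3 (v + w) ≤ norm3 v + norm3 w := by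
  simp only [norm3_eq, WithLp.toLp_add]
  exact norm_add_le _ _

lemma norm3_sub_le (v w : Fin 3 → ℝ) : norm3 (v - w) ≤ norm3 v + norm3 w := by
  simp only [norm3_eq, WithLp.toLp_sub]
  exact norm_sub_le _ _

lemma norm3_emb_sub (v w : Fin 2 → ℝ) : norm3 (emb v - emb w) = norm2 (v - w) := by
  simp [norm3, norm2, emb]

lemma abs_le_norm3 (v : Fin 3 → ℝ) : |v 2| ≤ norm3 v := by
  apply Real.abs_le_sqrt
  nlinarith [sq_nonneg (v 0), sq_nonneg (v 1)]

/-- Peetre-type inequality. -/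
lemma peetre_aux (x : Fin 2 → ℝ) (g : Fin 3 → ℝ) (S : ℝ) (hg : norm3 g ≤ S) :
    1 + (x 0 ^ 2 + x 1 ^ 2) ≤ (1 + S) ^ 2 * (1 + norm3 (emb x + g) ^ 2) := by
  have h0 := norm3_nonneg g
  have h1 : norm3 (emb x) ≤ norm3 (emb x + g) + norm3 g := by
    have := norm3_sub_le (emb x + g) g
    simpa using this
  have h2 : norm3 (emb x) ^ 2 = x 0 ^ 2 + x 1 ^ 2 := by
    rw [norm3_sq]; simp [emb]
  rw [← h2]
  have h3 := norm3_nonneg (emb x)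
  have h4 := norm3_nonneg (emb x + g)
  generalize norm3 (emb x + g) = y at *
  have hS : 0 ≤ S := h0.trans hg
  have h5 : norm3 (emb x) ^ 2 ≤ (y + S) ^ 2 := pow_le_pow_left₀ h3 (by linarith) 2
  nlinarith [mul_nonneg hS (sq_nonneg (y - 1)), mul_nonneg hS (sq_nonneg y), sq_nonneg (S * y)]

lemma pointwise_aux (r : ℝ) (hr : 1 < r) (x : Fin 2 → ℝ) (g : Fin 3 → ℝ) (S M φ : ℝ) (hg : norm3 g ≤ S)
    (h : jap3 (emb x + g) ^ (2 * r) * φ ≤ M) (hφ : 0 ≤ φ) :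
    φ ≤ (1 + S) ^ (2 * r) * M * (1 + (x 0 ^ 2 + x 1 ^ 2)) ^ (-r) := by
  have hS : 0 ≤ S := (norm3_nonneg g).trans hg
  have hp := peetre_aux x g S hg
  have hj : jap3 (emb x + g) ^ (2 * r) = (1 + norm3 (emb x + g) ^ 2) ^ r := by
    rw [jap3, Real.rpow_mul (Real.sqrt_nonneg _), Real.rpow_two, Real.sq_sqrt (by positivity)]
  have hs : (1 + S) ^ (2 * r) = ((1 + S) ^ 2) ^ r := by
    rw [Real.rpow_mul (by positivity), Real.rpow_two]
  have hX : 0 < 1 + (x 0 ^ 2 + x 1 ^ 2) := by positivity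
  have h1 : (1 + (x 0 ^ 2 + x 1 ^ 2)) ^ r ≤ (1 + S) ^ (2 * r) * jap3 (emb x + g) ^ (2 * r) := by
    rw [hj, hs, ← Real.mul_rpow (by positivity) (by positivity)]
    exact Real.rpow_le_rpow hX.le hp (by linarith)
  rw [Real.rpow_neg hX.le, ← div_eq_mul_inv, le_div_iff₀ (Real.rpow_pos_of_pos hX r)]
  calc φ * (1 + (x 0 ^ 2 + x 1 ^ 2)) ^ r
      ≤ φ * ((1 + S) ^ (2 * r) * jap3 (emb x + g) ^ (2 * r)) := by gcongr
    _ = (1 + S) ^ (2 * r) * (jap3 (emb x + g) ^ (2 * r) * φ) := by ring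
    _ ≤ (1 + S) ^ (2 * r) * M := by gcongr

/-- Lemma: integrability bound for shifted weighted potentials.
Layer `a` plays the role of layer `j`, layer `b` the role of layer `3−j`. -/
theorem shifted_potential_L1_bound (θ q r : ℝ) (hq : 0 < q) (hr : 1 < r)
    (A A1 A2 : Matrix (Fin 2) (Fin 2) ℝ)
    (hA : IsUnit A.det)
    (hA1 : A1 = (Real.sqrt q)⁻¹ • (Rot (-(θ / 2)) * A))
    (hA2 : A2 = Real.sqrt q • (Rot (θ / 2) * A))
    (Aa Ab Dj : Matrix (Fin 2) (Fin 2) ℝ)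
    (hcase : (Aa = A1 ∧ Ab = A2) ∨ (Aa = A2 ∧ Ab = A1))
    (hDj : Dj = 1 - Ab * Aa⁻¹) (hDjinv : IsUnit Dj.det)
    (𝓐a 𝓐b : Type) [Fintype 𝓐a] [Fintype 𝓐b] [Nonempty 𝓐a] [Nonempty 𝓐b]
    (τa : 𝓐a → Fin 2 → ℝ) (τb : 𝓐b → Fin 2 → ℝ)
    (ua : (Fin 2 → ℝ) → 𝓐a → Fin 3 → ℝ) (ub : (Fin 2 → ℝ) → 𝓐b → Fin 3 → ℝ)
    -- u₁, u₂ ∈ L^∞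
    (hua : ∃ C : ℝ, ∀ x α, norm3 (ua x α) ≤ C)
    (hub : ∃ C : ℝ, ∀ x α, norm3 (ub x α) ≤ C)
    (αa : 𝓐a) (αb : 𝓐b) (γb : Fin 2 → ℝ) (hγb : γb ∈ cell Ab)
    (f : (Fin 3 → ℝ) → ℝ)
    -- f ∈ L^∞_{2r}(ℝ² × [−L_u^z, L_u^z])
    (hf : BddAbove (Set.range fun x : ↥(slab
        ((⨆ α1 : 𝓐a, ⨆ α2 : 𝓐b, norm2 (τa α1 - τb α2)) +
          (⨆ x : Fin 2 → ℝ, ⨆ α : 𝓐a, |ua x α 2|) +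
          (⨆ x : Fin 2 → ℝ, ⨆ α : 𝓐b, |ub x α 2|))) =>
      jap3 x.1 ^ (2 * r) * |f x.1|)) :
    ∫⁻ x : Fin 2 → ℝ,
        ENNReal.ofReal
          |f (emb x +
            (emb (τa αa) - emb (τb αb) +
              ua (Dj⁻¹.mulVec (x + γb)) αa -
              ub (Dj⁻¹.mulVec (x + γb) - x) αb))| ≤
      ENNReal.ofReal
        ((5 : ℝ) ^ (r - 1) * π / (r - 1) *
          (1 + (⨆ α1 : 𝓐a, ⨆ α2 : 𝓐b, norm2 (τa α1 - τb α2)) +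
            (⨆ x : Fin 2 → ℝ, ⨆ α : 𝓐a, norm3 (ua x α)) +
            (⨆ x : Fin 2 → ℝ, ⨆ α : 𝓐b, norm3 (ub x α))) ^ (2 * r) *
          (⨆ x : ↥(slab
              ((⨆ α1 : 𝓐a, ⨆ α2 : 𝓐b, norm2 (τa α1 - τb α2)) +
                (⨆ x : Fin 2 → ℝ, ⨆ α : 𝓐a, |ua x α 2|) +
                (⨆ x : Fin 2 → ℝ, ⨆ α : 𝓐b, |ub x α 2|))),
            jap3 x.1 ^ (2 * r) * |f x.1|)) := by
  obtain ⟨Ca, hCa⟩ := hua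
  obtain ⟨Cb, hCb⟩ := hub
  have hd : norm2 (τa αa - τb αb) ≤ ⨆ α1 : 𝓐a, ⨆ α2 : 𝓐b, norm2 (τa α1 - τb α2) :=
    (le_ciSup (f := fun α2 => norm2 (τa αa - τb α2)) (Set.finite_range _).bddAbove αb).trans
      (le_ciSup (f := fun α1 => ⨆ α2 : 𝓐b, norm2 (τa α1 - τb α2)) (Set.finite_range _).bddAbove αa)
  have hd0 : 0 ≤ norm2 (τa αa - τb αb) := Real.sqrt_nonneg _
  have hna := le_iSup2 (fun x α => norm3 (ua x α)) Ca hCa (fun _ _ => norm3_nonneg _)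
  have hnb := le_iSup2 (fun x α => norm3 (ub x α)) Cb hCb (fun _ _ => norm3_nonneg _)
  have hza := le_iSup2 (fun x α => |ua x α 2|) Ca (fun x α => (abs_le_norm3 _).trans (hCa x α))
    (fun _ _ => abs_nonneg _)
  have hzb := le_iSup2 (fun x α => |ub x α 2|) Cb (fun x α => (abs_le_norm3 _).trans (hCb x α))
    (fun _ _ => abs_nonneg _)
  generalize (⨆ α1 : 𝓐a, ⨆ α2 : 𝓐b, norm2 (τa α1 - τb α2)) = d at *
  generalize (⨆ x : Fin 2 → ℝ, ⨆ α : 𝓐a, norm3 (ua x α)) = na at *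
  generalize (⨆ x : Fin 2 → ℝ, ⨆ α : 𝓐b, norm3 (ub x α)) = nb at *
  generalize (⨆ x : Fin 2 → ℝ, ⨆ α : 𝓐a, |ua x α 2|) = za at *
  generalize (⨆ x : Fin 2 → ℝ, ⨆ α : 𝓐b, |ub x α 2|) = zb at *
  have hna0 : 0 ≤ na := (norm3_nonneg _).trans (hna 0 αa)
  have hnb0 : 0 ≤ nb := (norm3_nonneg _).trans (hnb 0 αb)
  have hM := fun y : slab (d + za + zb) => le_ciSup hf y
  have hM0 : 0 ≤ ⨆ x : slab (d + za + zb), jap3 x.1 ^ (2 * r) * |f x.1| :=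
    Real.iSup_nonneg fun x => mul_nonneg (Real.rpow_nonneg (Real.sqrt_nonneg _) _) (abs_nonneg _)
  generalize (⨆ x : slab (d + za + zb), jap3 x.1 ^ (2 * r) * |f x.1|) = M at *
  have hK0 : 0 ≤ (1 + (d + na + nb)) ^ (2 * r) * M :=
    mul_nonneg (Real.rpow_nonneg (by linarith) _) hM0
  have hr0 : 0 < r - 1 := by linarith
  calc _ ≤ ∫⁻ x : Fin 2 → ℝ, ENNReal.ofReal ((1 + (d + na + nb)) ^ (2 * r) * M) *
        ENNReal.ofReal ((1 + (x 0 ^ 2 + x 1 ^ 2)) ^ (-r)) := by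
        refine lintegral_mono fun x => ?_
        rw [← ENNReal.ofReal_mul hK0]
        apply ENNReal.ofReal_le_ofReal
        refine pointwise_aux r hr x (emb (τa αa) - emb (τb αb) + ua (Dj⁻¹ *ᵥ (x + γb)) αa -
          ub (Dj⁻¹ *ᵥ (x + γb) - x) αb) (d + na + nb) M _ ?_ ?_ (abs_nonneg _)
        · refine (norm3_sub_le _ _).trans (add_le_add ((norm3_add_le _ _).trans ?_) (hnb _ _))
          rw [norm3_emb_sub]
          exact add_le_add hd (hna _ _)
        · refine hM ⟨_, ?_⟩
          have h1 := abs_le.1 (hza (Dj⁻¹.mulVec (x + γb)) αa)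
          have h2 := abs_le.1 (hzb (Dj⁻¹.mulVec (x + γb) - x) αb)
          simp only [slab, Set.mem_setOf_eq, Set.mem_Icc, Pi.add_apply, Pi.sub_apply]
          have h3 : ∀ v : Fin 2 → ℝ, emb v 2 = 0 := fun v => by simp [emb]
          simp only [h3]
          constructor <;> linarith
    _ = ENNReal.ofReal ((1 + (d + na + nb)) ^ (2 * r) * M * (π / (r - 1))) := by
        rw [lintegral_const_mul' _ _ ENNReal.ofReal_ne_top, plane_aux r hr,
          ← ENNReal.ofReal_mul hK0]
    _ ≤ _ := by
        apply ENNReal.ofReal_le_ofReal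
        have h5 : (1:ℝ) ≤ 5 ^ (r - 1) := Real.one_le_rpow (by norm_num) hr0.le
        have h6 : 0 ≤ (1 + (d + na + nb)) ^ (2 * r) * M * (π / (r - 1)) :=
          mul_nonneg hK0 (by positivity)
        calc _ ≤ (5:ℝ) ^ (r - 1) * ((1 + (d + na + nb)) ^ (2 * r) * M * (π / (r - 1))) :=
              le_mul_of_one_le_left h6 h5
          _ = _ := by rw [show 1 + d + na + nb = 1 + (d + na + nb) by ring]; ring

end
end

section
/- Let r > 1 and fix j ∈ {1,2}. Assume u_k(·, α_k) ∈ L^∞(ℝ²; ℝ³) is 𝓡_𝓜-periodic and v_{(α₁,α₂)} ∈ L^∞_{2r}(ℝ² × [−L_u^z, L_u^z]) for all α_k ∈ 𝓐_k. Then the generalized interlayer site potential Ψ_j[u] belongs to L¹(Γ_𝓜 × Γ_{3−j}). -/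
open scoped Real BigOperators
open MeasureTheory Filter Topology Matrix

noncomputable section

/-- The sublattice-averaged interlayer site potential `Ψ_j[u](x,y)` for pair potentials,
with layer `a` playing the role of layer `j` and layer `b` that of layer `3−j`. -/
def PsiPair {𝓐a 𝓐b : Type} [Fintype 𝓐a] [Fintype 𝓐b]
    (Aa Ab : Matrix (Fin 2) (Fin 2) ℝ)
    (w : 𝓐a → 𝓐b → (Fin 3 → ℝ) → ℝ)
    (τa : 𝓐a → Fin 2 → ℝ) (τb : 𝓐b → Fin 2 → ℝ)
    (ua : (Fin 2 → ℝ) → 𝓐a → Fin 3 → ℝ) (ub : (Fin 2 → ℝ) → 𝓐b → Fin 3 → ℝ)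
    (x y : Fin 2 → ℝ) : ℝ :=
  (2 * |Aa.det|)⁻¹ *
    ∑ αa : 𝓐a, ∑ αb : 𝓐b, ∑' n : Fin 2 → ℤ,
      w αa αb (emb y - emb (Ab.mulVec (iv n)) + emb (τa αa) - emb (τb αb) +
        ua x αa - ub (x - y + Ab.mulVec (iv n)) αb)

lemma aux_abs_le_norm3 (z : Fin 3 → ℝ) (i : Fin 3) : |z i| ≤ norm3 z := by
  unfold norm3
  apply Real.abs_le_sqrt
  fin_cases i <;> simp <;> nlinarith [sq_nonneg (z 0), sq_nonneg (z 1), sq_nonneg (z 2)]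

lemma aux_norm3_le_jap3 (z : Fin 3 → ℝ) : norm3 z ≤ jap3 z := by
  unfold jap3
  apply Real.le_sqrt_of_sq_le
  linarith

lemma aux_one_le_jap3 (z : Fin 3 → ℝ) : 1 ≤ jap3 z := by
  unfold jap3
  apply Real.le_sqrt_of_sq_le
  nlinarith [sq_nonneg (norm3 z)]

lemma aux_key (M : Matrix (Fin 2) (Fin 2) ℝ) (hM : IsUnit M.det) (D : ℝ) (hD : 0 ≤ D) :
    ∃ K : ℝ, 0 < K ∧ ∀ (n : Fin 2 → ℤ) (z : Fin 3 → ℝ),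
      |z 0 + M.mulVec (iv n) 0| ≤ D → |z 1 + M.mulVec (iv n) 1| ≤ D →
      1 + ‖n‖ ≤ K * jap3 z := by
  set S : ℝ := ∑ i, ∑ j, |M⁻¹ i j| with hS
  have hS0 : 0 ≤ S := Finset.sum_nonneg fun i _ => Finset.sum_nonneg fun j _ => abs_nonneg _
  refine ⟨1 + S * (D + 1), by positivity, fun n z h0 h1 => ?_⟩
  have hj1 := aux_one_le_jap3 z
  have hb : ∀ j : Fin 2, |M.mulVec (iv n) j| ≤ (D + 1) * jap3 z := by
    have hz : ∀ i, |z i| ≤ jap3 z := fun i => (aux_abs_le_norm3 z i).trans (aux_norm3_le_jap3 z)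
    intro j
    have : |M.mulVec (iv n) j| ≤ D + jap3 z := by
      fin_cases j
      · have := hz 0
        simp only [abs_le] at *
        constructor <;> simp only [Fin.zero_eta] <;> linarith [h0.1, h0.2]
      · have := hz 1
        simp only [abs_le] at *
        constructor <;> simp only [Fin.mk_one] <;> linarith [h1.1, h1.2]
    nlinarith
  have hn : ‖n‖ ≤ S * ((D + 1) * jap3 z) := by
    have hinv : iv n = M⁻¹.mulVec (M.mulVec (iv n)) := by
      rw [Matrix.mulVec_mulVec, Matrix.nonsing_inv_mul _ hM, Matrix.one_mulVec]
    refine (pi_norm_le_iff_of_nonneg (by positivity)).2 fun i => ?_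
    have h1 : ‖n i‖ = |iv n i| := by simp [iv, Int.norm_eq_abs]
    rw [h1, hinv]
    calc |M⁻¹.mulVec (M.mulVec (iv n)) i|
        = |∑ j, M⁻¹ i j * M.mulVec (iv n) j| := rfl
      _ ≤ ∑ j, |M⁻¹ i j * M.mulVec (iv n) j| := Finset.abs_sum_le_sum_abs _ _
      _ ≤ ∑ j, |M⁻¹ i j| * ((D + 1) * jap3 z) := by
          refine Finset.sum_le_sum fun j _ => ?_
          rw [abs_mul]
          exact mul_le_mul_of_nonneg_left (hb j) (abs_nonneg _)
      _ = (∑ j, |M⁻¹ i j|) * ((D + 1) * jap3 z) := by rw [Finset.sum_mul]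
      _ ≤ S * ((D + 1) * jap3 z) := by
          refine mul_le_mul_of_nonneg_right ?_ (by positivity)
          exact Finset.single_le_sum (f := fun i => ∑ j, |M⁻¹ i j|)
            (fun i _ => Finset.sum_nonneg fun j _ => abs_nonneg _) (Finset.mem_univ i)
  nlinarith

lemma aux_summable (r : ℝ) (hr : 1 < r) :
    Summable fun n : Fin 2 → ℤ => (1 + ‖n‖) ^ (-(2 * r)) := by
  have h := EisensteinSeries.summable_one_div_norm_rpow (k := 2 * r) (by linarith)
  refine Summable.of_norm_bounded_eventually h ?_
  rw [Filter.eventually_cofinite]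
  refine (Set.finite_singleton (0 : Fin 2 → ℤ)).subset fun n hn => ?_
  by_contra hne
  apply hn
  have hpos : 0 < ‖n‖ := norm_pos_iff.2 hne
  rw [Real.norm_of_nonneg (by positivity)]
  exact Real.rpow_le_rpow_of_nonpos hpos (by linarith) (by linarith)

lemma aux_decay (r C K a J t : ℝ) (hr : 1 < r) (hK : 0 < K) (ha : 0 < a) (hJ : 1 ≤ J)
    (haJ : a ≤ K * J) (h : J ^ (2 * r) * |t| ≤ C) :
    |t| ≤ |C| * K ^ (2 * r) * a ^ (-(2 * r)) := by
  have hJp : 0 < J ^ (2 * r) := Real.rpow_pos_of_pos (by linarith) _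
  have hap : 0 < a ^ (2 * r) := Real.rpow_pos_of_pos ha _
  have hle : a ^ (2 * r) ≤ K ^ (2 * r) * J ^ (2 * r) := by
    rw [← Real.mul_rpow hK.le (by linarith)]
    exact Real.rpow_le_rpow ha.le haJ (by linarith)
  rw [Real.rpow_neg ha.le, ← div_eq_mul_inv, le_div_iff₀ hap]
  calc |t| * a ^ (2 * r) ≤ |t| * (K ^ (2 * r) * J ^ (2 * r)) :=
        mul_le_mul_of_nonneg_left hle (abs_nonneg _)
    _ = K ^ (2 * r) * (J ^ (2 * r) * |t|) := by ring
    _ ≤ K ^ (2 * r) * |C| :=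
        mul_le_mul_of_nonneg_left (h.trans (le_abs_self C)) (by positivity)
    _ = |C| * K ^ (2 * r) := by ring

lemma aux_sup {X ι : Type} [Nonempty ι] (f : X → ι → ℝ) (C : ℝ) (hC : ∀ x a, f x a ≤ C)
    (x : X) (a : ι) : f x a ≤ ⨆ x, ⨆ a, f x a := by
  have h1 : f x a ≤ ⨆ a, f x a := le_ciSup (f := f x) ⟨C, by rintro _ ⟨b, rfl⟩; exact hC x b⟩ a
  have h2 : (⨆ a, f x a) ≤ ⨆ x, ⨆ a, f x a :=
    le_ciSup (f := fun x => ⨆ a, f x a) ⟨C, by rintro _ ⟨b, rfl⟩; exact ciSup_le (hC b)⟩ x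
  exact h1.trans h2

lemma aux_cell (M : Matrix (Fin 2) (Fin 2) ℝ) :
    ∃ D : ℝ, 0 ≤ D ∧ cell M ⊆ Metric.closedBall 0 D := by
  refine ⟨∑ i, ∑ j, |M i j|, by positivity, ?_⟩
  rintro _ ⟨t, ht, rfl⟩
  rw [mem_closedBall_zero_iff]
  refine (pi_norm_le_iff_of_nonneg (by positivity)).2 fun i => ?_
  calc ‖M.mulVec t i‖ = |∑ j, M i j * t j| := rfl
    _ ≤ ∑ j, |M i j * t j| := Finset.abs_sum_le_sum_abs _ _
    _ ≤ ∑ j, |M i j| := by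
        refine Finset.sum_le_sum fun j _ => ?_
        rw [abs_mul, abs_of_nonneg (ht j).1]
        exact mul_le_of_le_one_right (abs_nonneg _) (ht j).2.le
    _ ≤ _ := Finset.single_le_sum (f := fun i => ∑ j, |M i j|)
            (fun i _ => Finset.sum_nonneg fun j _ => abs_nonneg _) (Finset.mem_univ i)

lemma aux_det_rot (φ : ℝ) : (Rot φ).det = 1 := by
  simp [Rot, Matrix.det_fin_two]
  nlinarith [Real.sin_sq_add_cos_sq φ]

lemma aux_det (c φ : ℝ) (hc : c ≠ 0) (A : Matrix (Fin 2) (Fin 2) ℝ) (hA : IsUnit A.det) :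
    IsUnit (c • (Rot φ * A)).det := by
  rw [Matrix.det_smul, Matrix.det_mul, aux_det_rot]
  simp only [one_mul, isUnit_iff_ne_zero] at *
  exact mul_ne_zero (pow_ne_zero _ hc) hA

lemma aux_emb0 (x : Fin 2 → ℝ) : emb x 0 = x 0 := rfl

lemma aux_emb1 (x : Fin 2 → ℝ) : emb x 1 = x 1 := rfl

lemma aux_emb2 (x : Fin 2 → ℝ) : emb x 2 = 0 := rfl

lemma aux_emb_meas : Measurable emb := by
  unfold emb
  refine measurable_pi_iff.2 fun i => ?_
  fin_cases i <;> simp <;> fun_prop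

/-- Lemma: the interlayer site potential is in `L¹(Γ_𝓜 × Γ_{3−j})`. -/
theorem site_potential_L1 (θ q r : ℝ) (hq : 0 < q) (hr : 1 < r)
    (A A1 A2 B1 B2 BM AM : Matrix (Fin 2) (Fin 2) ℝ)
    (hA : IsUnit A.det)
    (hA1 : A1 = (Real.sqrt q)⁻¹ • (Rot (-(θ / 2)) * A))
    (hA2 : A2 = Real.sqrt q • (Rot (θ / 2) * A))
    (hB1 : B1 = recip A1) (hB2 : B2 = recip A2)
    (hBM : BM = B1 - B2) (hBMinv : IsUnit BM.det)
    (hAM : AM = recip BM)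
    (Aa Ab : Matrix (Fin 2) (Fin 2) ℝ)
    (hcase : (Aa = A1 ∧ Ab = A2) ∨ (Aa = A2 ∧ Ab = A1))
    (𝓐a 𝓐b : Type) [Fintype 𝓐a] [Fintype 𝓐b] [Nonempty 𝓐a] [Nonempty 𝓐b]
    (τa : 𝓐a → Fin 2 → ℝ) (τb : 𝓐b → Fin 2 → ℝ)
    (ua : (Fin 2 → ℝ) → 𝓐a → Fin 3 → ℝ) (ub : (Fin 2 → ℝ) → 𝓐b → Fin 3 → ℝ)
    -- u₁, u₂ ∈ L^∞, measurable and 𝓡_𝓜-periodic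
    (huameas : ∀ α, Measurable fun x => ua x α)
    (hubmeas : ∀ α, Measurable fun x => ub x α)
    (hua : ∃ C : ℝ, ∀ x α, norm3 (ua x α) ≤ C)
    (hub : ∃ C : ℝ, ∀ x α, norm3 (ub x α) ≤ C)
    (huaper : ∀ (x : Fin 2 → ℝ), ∀ rM ∈ lat AM, ∀ α, ua (x + rM) α = ua x α)
    (hubper : ∀ (x : Fin 2 → ℝ), ∀ rM ∈ lat AM, ∀ α, ub (x + rM) α = ub x α)
    (v : 𝓐a → 𝓐b → (Fin 3 → ℝ) → ℝ)
    (hvmeas : ∀ αa αb, Measurable (v αa αb))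
    -- v ∈ L^∞_{2r}(ℝ² × [−L_u^z, L_u^z])
    (hv : ∀ αa αb, ∃ C : ℝ, ∀ x ∈ slab
        ((⨆ α1 : 𝓐a, ⨆ α2 : 𝓐b, norm2 (τa α1 - τb α2)) +
          (⨆ x : Fin 2 → ℝ, ⨆ α : 𝓐a, |ua x α 2|) +
          (⨆ x : Fin 2 → ℝ, ⨆ α : 𝓐b, |ub x α 2|)),
      jap3 x ^ (2 * r) * |v αa αb x| ≤ C) :
    IntegrableOn (fun p : (Fin 2 → ℝ) × (Fin 2 → ℝ) => PsiPair Aa Ab v τa τb ua ub p.1 p.2)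
      ((cell AM) ×ˢ (cell Ab)) := by
  have hAb : IsUnit Ab.det := by
    have hs : Real.sqrt q ≠ 0 := (Real.sqrt_pos.2 hq).ne'
    rcases hcase with ⟨-, rfl⟩ | ⟨-, rfl⟩
    · rw [hA2]; exact aux_det _ _ hs A hA
    · rw [hA1]; exact aux_det _ _ (inv_ne_zero hs) A hA
  obtain ⟨Ca, hCa⟩ := hua
  obtain ⟨Cb, hCb⟩ := hub
  obtain ⟨D1, hD1, hc1⟩ := aux_cell AM
  obtain ⟨D2, hD2, hc2⟩ := aux_cell Ab
  refine IntegrableOn.mono_set ?_ (Set.prod_mono hc1 hc2)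
  unfold PsiPair
  refine Integrable.const_mul ?_ _
  refine integrable_finsetSum _ fun αa _ => integrable_finsetSum _ fun αb _ => ?_
  obtain ⟨C, hC⟩ := hv αa αb
  have hCa0 : 0 ≤ Ca := (Real.sqrt_nonneg _).trans (hCa 0 αa)
  have hCb0 : 0 ≤ Cb := (Real.sqrt_nonneg _).trans (hCb 0 αb)
  set D : ℝ := D2 + ‖τa αa‖ + ‖τb αb‖ + Ca + Cb with hDdef
  obtain ⟨K, hK, hkey⟩ := aux_key Ab hAb D (by positivity)
  have hbound : ∀ (x y : Fin 2 → ℝ), ‖y‖ ≤ D2 → ∀ n : Fin 2 → ℤ,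
      ‖v αa αb (emb y - emb (Ab.mulVec (iv n)) + emb (τa αa) - emb (τb αb) +
        ua x αa - ub (x - y + Ab.mulVec (iv n)) αb)‖ ≤
      |C| * K ^ (2 * r) * (1 + ‖n‖) ^ (-(2 * r)) := by
    intro x y hy n
    set z := emb y - emb (Ab.mulVec (iv n)) + emb (τa αa) - emb (τb αb) +
        ua x αa - ub (x - y + Ab.mulVec (iv n)) αb with hz
    have hua' : ∀ i, |ua x αa i| ≤ Ca := fun i => (aux_abs_le_norm3 _ i).trans (hCa x αa)
    have hub' : ∀ i, |ub (x - y + Ab.mulVec (iv n)) αb i| ≤ Cb :=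
      fun i => (aux_abs_le_norm3 _ i).trans (hCb _ αb)
    have hy' : ∀ i, |y i| ≤ D2 := fun i => (norm_le_pi_norm y i).trans hy
    have hta : ∀ i, |τa αa i| ≤ ‖τa αa‖ := fun i => norm_le_pi_norm (τa αa) i
    have htb : ∀ i, |τb αb i| ≤ ‖τb αb‖ := fun i => norm_le_pi_norm (τb αb) i
    have hslab := hC z ?_
    · rw [Real.norm_eq_abs]
      refine aux_decay r C K _ (jap3 z) _ hr hK (by positivity) (aux_one_le_jap3 z) ?_ hslab
      apply hkey n z
      · have e : z 0 + Ab.mulVec (iv n) 0 = y 0 + τa αa 0 - τb αb 0 + ua x αa 0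
            - ub (x - y + Ab.mulVec (iv n)) αb 0 := by
          simp only [hz, Pi.add_apply, Pi.sub_apply, aux_emb0, aux_emb1, aux_emb2]; ring
        rw [e]
        have h1 := abs_le.1 (hua' 0)
        have h2 := abs_le.1 (hub' 0)
        have h3 := abs_le.1 (hy' 0)
        have h4 := abs_le.1 (hta 0)
        have h5 := abs_le.1 (htb 0)
        rw [abs_le]
        constructor <;> linarith [h1.1, h1.2, h2.1, h2.2, h3.1, h3.2, h4.1, h4.2, h5.1, h5.2]
      · have e : z 1 + Ab.mulVec (iv n) 1 = y 1 + τa αa 1 - τb αb 1 + ua x αa 1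
            - ub (x - y + Ab.mulVec (iv n)) αb 1 := by
          simp only [hz, Pi.add_apply, Pi.sub_apply, aux_emb0, aux_emb1, aux_emb2]; ring
        rw [e]
        have h1 := abs_le.1 (hua' 1)
        have h2 := abs_le.1 (hub' 1)
        have h3 := abs_le.1 (hy' 1)
        have h4 := abs_le.1 (hta 1)
        have h5 := abs_le.1 (htb 1)
        rw [abs_le]
        constructor <;> linarith [h1.1, h1.2, h2.1, h2.2, h3.1, h3.2, h4.1, h4.2, h5.1, h5.2]
    · have e : z 2 = ua x αa 2 - ub (x - y + Ab.mulVec (iv n)) αb 2 := by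
        simp only [hz, Pi.add_apply, Pi.sub_apply, aux_emb0, aux_emb1, aux_emb2]; ring
      have s0 : 0 ≤ ⨆ α1 : 𝓐a, ⨆ α2 : 𝓐b, norm2 (τa α1 - τb α2) :=
        Real.iSup_nonneg fun _ => Real.iSup_nonneg fun _ => Real.sqrt_nonneg _
      have s1 := aux_sup (fun x α => |ua x α 2|) Ca
        (fun x α => (aux_abs_le_norm3 _ 2).trans (hCa x α)) x αa
      have s2 := aux_sup (fun x α => |ub x α 2|) Cb
        (fun x α => (aux_abs_le_norm3 _ 2).trans (hCb x α)) (x - y + Ab.mulVec (iv n)) αb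
      have h1 := abs_le.1 s1
      have h2 := abs_le.1 s2
      show z 2 ∈ Set.Icc _ _
      rw [e]
      constructor <;> linarith [h1.1, h1.2, h2.1, h2.2]
  have hsum : Summable fun n : Fin 2 → ℤ => |C| * K ^ (2 * r) * (1 + ‖n‖) ^ (-(2 * r)) :=
    (aux_summable r hr).mul_left _
  refine Measure.integrableOn_of_bounded
    (M := ∑' n : Fin 2 → ℤ, |C| * K ^ (2 * r) * (1 + ‖n‖) ^ (-(2 * r))) ?_ ?_ ?_
  · exact ((isCompact_closedBall _ _).prod (isCompact_closedBall _ _)).measure_lt_top.ne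
  · refine Measurable.aestronglyMeasurable ?_
    refine Measurable.tsum fun n => (hvmeas αa αb).comp ?_
    have m1 : Measurable fun p : (Fin 2 → ℝ) × (Fin 2 → ℝ) => emb p.2 :=
      aux_emb_meas.comp measurable_snd
    have m2 : Measurable fun p : (Fin 2 → ℝ) × (Fin 2 → ℝ) => ua p.1 αa :=
      (huameas αa).comp measurable_fst
    have m3 : Measurable fun p : (Fin 2 → ℝ) × (Fin 2 → ℝ) =>
        ub (p.1 - p.2 + Ab.mulVec (iv n)) αb :=
      (hubmeas αb).comp ((measurable_fst.sub measurable_snd).add_const _)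
    exact ((((m1.sub_const _).add_const _).sub_const _).add m2).sub m3
  · refine ae_restrict_of_forall_mem
      (Metric.isClosed_closedBall.measurableSet.prod Metric.isClosed_closedBall.measurableSet) ?_
    rintro ⟨x, y⟩ ⟨-, hy⟩
    exact tsum_of_norm_bounded hsum.hasSum (hbound x y (mem_closedBall_zero_iff.1 hy))


end
end
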